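/- Let n = p1⋯pk be an odd positive squarefree integer with distinct prime factors, let d1 and d2 be positive divisors of n, and let d3 be the squarefree part of d1·d2. Then the system H1: −n·t² + d2·u2² − d3·u3² = 0, H2: −n·t² + d3·u3² − d1·u1² = 0, H3: 2n·t² + d1·u1² − d2·u2² = 0 has a nonzero solution over ℝ and over ℚ_p for every prime p if and only if M_n·x = 0 in F_2^{2k}, where x = (v_{p1}(d1), …, v_{pk}(d1), v_{p1}(d2), …, v_{pk}(d2))^T and v_p denotes the p-adic valuation. -/

import Mathlib

open Classical in
/-- The additive Legendre symbol `[a/p] ∈ F₂`: `0` if `a` is a square mod `p`, `1` otherwise. -/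
noncomputable def aLeg (a : ℤ) (p : ℕ) : ZMod 2 :=
  if IsSquare ((a : ZMod p)) then 0 else 1

/-- The matrix `A` of the Monsky matrix: `a_{ij} = [p_j/p_i]` for `i ≠ j` and
`a_{ii} = Σ_{l ≠ i} [p_l/p_i]`. -/
noncomputable def monskyA (k : ℕ) (p : Fin k → ℕ) : Matrix (Fin k) (Fin k) (ZMod 2) :=
  Matrix.of fun i j =>
    if i = j then ∑ l ∈ Finset.univ.filter (· ≠ i), aLeg (p l) (p i) else aLeg (p j) (p i)

/-- The diagonal matrix `D_u = diag([u/p₁], …, [u/p_k])`. -/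
noncomputable def monskyD (k : ℕ) (p : Fin k → ℕ) (u : ℤ) : Matrix (Fin k) (Fin k) (ZMod 2) :=
  Matrix.diagonal fun i => aLeg u (p i)

/-- The Monsky matrix `M_n = [[A + D₋₂, D₂], [D₂, A + D₂]]`. -/
noncomputable def monskyM (k : ℕ) (p : Fin k → ℕ) :
    Matrix (Fin k ⊕ Fin k) (Fin k ⊕ Fin k) (ZMod 2) :=
  Matrix.fromBlocks (monskyA k p + monskyD k p (-2)) (monskyD k p 2)
    (monskyD k p 2) (monskyA k p + monskyD k p 2)

/-!
Eliminating the `uᵢ`, a solution of the system is a point on the `2`-covering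
`dᵢ uᵢ² = y - rᵢ t²` of the congruent number curve `Y² = X³ - n² X`, whose roots `rᵢ` are
`n`, `-n`, `0`. Such a covering has points over `ℝ` and, by counting points over the residue field,
at every odd prime of good reduction. At a prime `q ∣ n` the differences `rᵢ - rⱼ` have odd
valuation, so the parities of the valuations of the `dᵢ` turn solvability into the squareness
modulo `q` of two units, whose additive Legendre symbols are the two entries of `M_n x` at `q`.
Multiplying these conditions over all `q ∣ n` and applying quadratic reciprocity constrains
`n`, `d₁`, `d₂` modulo `8` just enough to write down a point over `ℚ₂`, so the prime `2` imposes
no further condition.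
-/

theorem isSquare_mul_iff_of_isSquare {G : Type*} [CommGroupWithZero G] {a b : G}
    (ha : IsSquare a) (ha₀ : a ≠ 0) : IsSquare (a * b) ↔ IsSquare b :=
  ⟨fun h => by simpa [ha₀] using h.div ha, ha.mul⟩

theorem isSquare_mul_of_isSquare_mul_left {G : Type*} [CommGroupWithZero G] {a b c : G}
    (ha : a ≠ 0) (hb : IsSquare (a * b)) (hc : IsSquare (a * c)) : IsSquare (b * c) := by
  rw [← isSquare_mul_iff_of_isSquare (IsSquare.sq a) (pow_ne_zero 2 ha)]
  simpa only [sq, mul_mul_mul_comm] using hb.mul hc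

theorem isSquare_iff_of_mul_mul_eq_sq {G : Type*} [CommGroupWithZero G] {a b c z : G}
    (ha : IsSquare a) (hz : z ≠ 0) (h : a * b * c = z ^ 2) : IsSquare b ↔ IsSquare c := by
  have habc : a * b * c ≠ 0 := h ▸ pow_ne_zero 2 hz
  have hsq : IsSquare (a * b * c) := h ▸ .sq z
  have hab := left_ne_zero_of_mul habc
  rw [← isSquare_mul_iff_of_isSquare ha (left_ne_zero_of_mul hab)]
  refine ⟨fun h' => (isSquare_mul_iff_of_isSquare h' hab).1 hsq, fun hc => ?_⟩
  rw [mul_comm, isSquare_mul_iff_of_isSquare hc (right_ne_zero_of_mul habc)] at hsq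
  exact hsq

section PadicSquares

variable {q : ℕ} [Fact q.Prime]

theorem isSquare_one_add_of_padic_norm_lt {z : ℚ_[q]} (hz : ‖z‖ < ‖(4 : ℚ_[q])‖) :
    IsSquare (1 + z) := by
  have h4 : ‖(4 : ℚ_[q])‖ ≤ 1 := by exact_mod_cast Padic.norm_int_le_one (p := q) 4
  obtain ⟨z, rfl⟩ : ∃ z' : ℤ_[q], z' = z := ⟨⟨z, hz.le.trans h4⟩, rfl⟩
  have hroot : ‖Polynomial.aeval (1 : ℤ_[q]) (Polynomial.X ^ 2 - Polynomial.C (1 + z))‖ <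
      ‖Polynomial.aeval (1 : ℤ_[q])
        (Polynomial.derivative (Polynomial.X ^ 2 - Polynomial.C (1 + z)))‖ ^ 2 := by
    have hz' : ‖z‖ < ‖(2 * 2 : ℤ_[q])‖ := by norm_num1; exact_mod_cast hz
    simpa [sq, one_add_one_eq_two] using hz'
  obtain ⟨w, hw, -⟩ := hensels_lemma hroot
  have hsq : IsSquare (1 + z) := ⟨w, (sub_eq_zero.1 (by simpa [sq] using hw)).symm⟩
  have hsq' : IsSquare ((1 + z : ℤ_[q]) : ℚ_[q]) := hsq.map PadicInt.Coe.ringHom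
  rwa [PadicInt.coe_add, PadicInt.coe_one] at hsq'

theorem isSquare_mul_add_iff_of_padic_norm_lt {d x y : ℚ_[q]} (h : ‖y‖ < ‖4 * x‖) :
    IsSquare (d * (x + y)) ↔ IsSquare (d * x) := by
  have hx : x ≠ 0 := by
    rintro rfl
    simp only [mul_zero, norm_zero] at h
    exact h.not_ge (norm_nonneg y)
  have hlt : ‖y / x‖ < ‖(4 : ℚ_[q])‖ := by
    rwa [norm_div, div_lt_iff₀ (norm_pos_iff.2 hx), ← norm_mul]
  have hne : 1 + y / x ≠ 0 := by
    intro h0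
    have h1 : ‖y / x‖ = 1 := by rw [eq_neg_of_add_eq_zero_right h0, norm_neg, norm_one]
    have h4 : ‖(4 : ℚ_[q])‖ ≤ 1 := by exact_mod_cast Padic.norm_int_le_one (p := q) 4
    linarith
  rw [← isSquare_mul_iff_of_isSquare (isSquare_one_add_of_padic_norm_lt hlt) hne (b := d * x)]
  congr! 1
  field_simp

theorem padic_norm_four_eq_one (hq : q ≠ 2) : ‖(4 : ℚ_[q])‖ = 1 := by
  have hcop : Nat.Coprime q (2 ^ 2) :=
    ((Nat.coprime_primes Fact.out Nat.prime_two).2 hq).pow_right 2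
  exact_mod_cast Padic.norm_natCast_eq_one_iff.2 hcop

theorem isSquare_padic_intCast_iff (hq : q ≠ 2) {m : ℤ} (hm : (m : ZMod q) ≠ 0) :
    IsSquare (m : ℚ_[q]) ↔ IsSquare (m : ZMod q) := by
  constructor
  · rintro ⟨x, hx⟩
    have hx1 : ‖x‖ ≤ 1 := by
      have hxx : ‖x‖ * ‖x‖ ≤ 1 := by rw [← norm_mul, ← hx]; exact Padic.norm_int_le_one m
      nlinarith [norm_nonneg x]
    obtain ⟨x, rfl⟩ : ∃ x' : ℤ_[q], x' = x := ⟨⟨x, hx1⟩, rfl⟩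
    have hsq : IsSquare (m : ℤ_[q]) := ⟨x, PadicInt.ext (by simpa using hx)⟩
    simpa using hsq.map PadicInt.toZMod
  · rintro ⟨x, hx⟩
    obtain ⟨a, rfl⟩ := ZMod.intCast_surjective x
    have hdvd : (q : ℤ) ∣ a * a - m := by
      rw [← ZMod.intCast_eq_intCast_iff_dvd_sub, hx, Int.cast_mul]
    have hnorm : ‖(m : ℚ_[q])‖ = 1 := by
      rw [ne_eq, ZMod.intCast_zmod_eq_zero_iff_dvd, ← Padic.norm_intCast_lt_one_iff] at hm
      exact (Padic.norm_int_le_one m).antisymm (not_lt.1 hm)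
    have hlt : ‖((a * a - m : ℤ) : ℚ_[q])‖ < ‖4 * (m : ℚ_[q])‖ := by
      rwa [norm_mul, padic_norm_four_eq_one hq, hnorm, one_mul, Padic.norm_intCast_lt_one_iff]
    have ha : IsSquare (1 * (m + (a * a - m : ℤ)) : ℚ_[q]) := ⟨a, by push_cast; ring⟩
    rwa [isSquare_mul_add_iff_of_padic_norm_lt hlt, one_mul] at ha

theorem isSquare_padic_two_intCast {m : ℤ} (hm : (m : ZMod 8) = 1) : IsSquare (m : ℚ_[2]) := by
  have h4 : ‖(4 : ℚ_[2])‖ = 4⁻¹ := by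
    have h := Padic.norm_p_pow (p := 2) 2
    norm_num at h ⊢
    exact h
  have hle : ‖((m - 1 : ℤ) : ℚ_[2])‖ ≤ (2 : ℕ) ^ (-3 : ℤ) :=
    (Padic.norm_int_le_pow_iff_dvd (m - 1) 3).2 <|
      (ZMod.intCast_zmod_eq_zero_iff_dvd (m - 1) 8).1 (by simp [hm])
  have hlt : ‖((m - 1 : ℤ) : ℚ_[2])‖ < ‖(4 : ℚ_[2])‖ :=
    h4 ▸ hle.trans_lt (by norm_num)
  simpa using isSquare_one_add_of_padic_norm_lt hlt

theorem padic_valuation_even_of_isSquare {x : ℚ_[q]} (hx : IsSquare x) : Even x.valuation := by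
  obtain ⟨y, rfl⟩ := (isSquare_iff_exists_sq x).1 hx
  rw [Padic.valuation_pow]
  exact even_two_mul _

theorem not_isSquare_of_padic_valuation_odd {x : ℚ_[q]} (hx : Odd x.valuation) : ¬IsSquare x :=
  fun h => Int.not_even_iff_odd.2 hx (padic_valuation_even_of_isSquare h)

theorem ne_zero_of_padic_valuation_odd {x : ℚ_[q]} (hx : Odd x.valuation) : x ≠ 0 := by
  rintro rfl
  exact not_isSquare_of_padic_valuation_odd hx .zero

theorem padic_norm_ne_of_valuation_parity {x y : ℚ_[q]} (hx : Even x.valuation)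
    (hy : Odd y.valuation) : ‖x‖ ≠ ‖y‖ := by
  intro h
  have hy₀ := ne_zero_of_padic_valuation_odd hy
  have hx₀ : x ≠ 0 := by rwa [← norm_ne_zero_iff, h, norm_ne_zero_iff]
  have hq : (1 : ℝ) < q := by exact_mod_cast (Fact.out : q.Prime).one_lt
  rw [Padic.norm_eq_zpow_neg_valuation hx₀, Padic.norm_eq_zpow_neg_valuation hy₀,
    zpow_right_inj₀ (by positivity) hq.ne', neg_inj] at h
  exact Int.not_even_iff_odd.2 hy (h ▸ hx)

end PadicSquares

section CoverPoints

/-- Solvability over `K` of the homogeneous space `d i * u i ^ 2 = y - r i * t ^ 2`, the covering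
with coefficients `d` of the curve `Y ^ 2 = ∏ i, (X - r i)` used in a `2`-descent. The unknowns
`u i` are eliminated, and only `t = y = 0` is excluded, since it forces every `u i` to vanish. -/
def HasCoverPoint {K ι : Type*} [Field K] (d r : ι → K) : Prop :=
  ∃ t y : K, ¬(t = 0 ∧ y = 0) ∧ ∀ i, IsSquare (d i * (y - r i * t ^ 2))

theorem hasCoverPoint_of_isSquare_mul {K ι : Type*} [Field K] {d r : ι → K} {i₀ : ι}
    (hd : d i₀ ≠ 0) (h : ∀ i, IsSquare (d i₀ * d i)) : HasCoverPoint d r :=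
  ⟨0, d i₀, fun h₀ => hd h₀.2, fun i => by simpa [mul_comm] using h i⟩

variable {q : ℕ} [Fact q.Prime] {ι : Type*} {d r : ι → ℚ_[q]}

theorem padic_valuation_mul_sq_odd {x z : ℚ_[q]} (hx : Odd x.valuation) (hz : z ≠ 0) :
    Odd (x * z ^ 2).valuation := by
  rw [Padic.valuation_mul (ne_zero_of_padic_valuation_odd hx) (pow_ne_zero 2 hz),
    Padic.valuation_pow]
  exact hx.add_even (even_two_mul _)

theorem padic_valuation_mul_odd {x y : ℚ_[q]} (hx₀ : x ≠ 0) (hx : Even x.valuation)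
    (hy : Odd y.valuation) : Odd (x * y).valuation := by
  rw [Padic.valuation_mul hx₀ (ne_zero_of_padic_valuation_odd hy)]
  exact hx.add_odd hy

theorem padic_valuation_even_of_isSquare_mul {x y : ℚ_[q]} (hx₀ : x ≠ 0) (hx : Even x.valuation)
    (hxy : IsSquare (x * y)) : Even y.valuation := by
  by_contra hy
  exact not_isSquare_of_padic_valuation_odd
    (padic_valuation_mul_odd hx₀ hx (Int.not_even_iff_odd.1 hy)) hxy

/- `y - r₁ * t ^ 2` is the sum of `y - r₀ * t ^ 2` and `(r₀ - r₁) * t ^ 2`, whose valuations have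
different parities, so it has the square class of one of them. -/
theorem isSquare_mul_or_of_isSquare_cover (hq : q ≠ 2) {d₀ d₁ r₀ r₁ t y : ℚ_[q]} (hd₀ : d₀ ≠ 0)
    (hd : Even d₀.valuation) (hr : Odd (r₀ - r₁).valuation) (hty : ¬(t = 0 ∧ y = 0))
    (h₀ : IsSquare (d₀ * (y - r₀ * t ^ 2))) (h₁ : IsSquare (d₁ * (y - r₁ * t ^ 2))) :
    IsSquare (d₀ * d₁) ∨ IsSquare (d₁ * (r₀ - r₁)) := by
  rcases eq_or_ne t 0 with rfl | ht
  · have hy : y ≠ 0 := fun hy => hty ⟨rfl, hy⟩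
    exact .inl (isSquare_mul_of_isSquare_mul_left hy
      (by simpa [mul_comm] using h₀) (by simpa [mul_comm] using h₁))
  set a := y - r₀ * t ^ 2 with ha
  set δ := (r₀ - r₁) * t ^ 2 with hδ
  have hne : ‖a‖ ≠ ‖δ‖ := padic_norm_ne_of_valuation_parity
    (padic_valuation_even_of_isSquare_mul hd₀ hd h₀) (padic_valuation_mul_sq_odd hr ht)
  rcases hne.lt_or_gt with hlt | hlt
  · right
    rw [show y - r₁ * t ^ 2 = δ + a by rw [ha, hδ]; ring, isSquare_mul_add_iff_of_padic_norm_lt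
      (by rwa [norm_mul 4, padic_norm_four_eq_one hq, one_mul]), hδ, ← mul_assoc, mul_comm] at h₁
    exact (isSquare_mul_iff_of_isSquare (IsSquare.sq t) (pow_ne_zero 2 ht)).1 h₁
  · left
    rw [show y - r₁ * t ^ 2 = a + δ by rw [ha, hδ]; ring, isSquare_mul_add_iff_of_padic_norm_lt
      (by rwa [norm_mul 4, padic_norm_four_eq_one hq, one_mul])] at h₁
    have ha₀ : a ≠ 0 := norm_pos_iff.1 ((norm_nonneg δ).trans_lt hlt)
    rw [mul_comm] at h₀ h₁
    exact isSquare_mul_of_isSquare_mul_left ha₀ h₀ h₁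

theorem hasCoverPoint_iff_of_even (hq : q ≠ 2) (i₀ : ι) (hd₀ : ∀ i, d i ≠ 0)
    (hd : ∀ i, Even (d i).valuation) (hr : ∀ i ≠ i₀, Odd (r i₀ - r i).valuation) :
    HasCoverPoint d r ↔ ∀ i, IsSquare (d i₀ * d i) := by
  refine ⟨fun ⟨t, y, hty, h⟩ i => ?_, hasCoverPoint_of_isSquare_mul (hd₀ i₀)⟩
  rcases eq_or_ne i i₀ with rfl | hi
  · exact .mul_self _
  · exact (isSquare_mul_or_of_isSquare_cover hq (hd₀ i₀) (hd i₀) (hr i hi) hty (h i₀)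
      (h i)).resolve_right
      (not_isSquare_of_padic_valuation_odd (padic_valuation_mul_odd (hd₀ i) (hd i) (hr i hi)))

theorem hasCoverPoint_iff_of_odd (hq : q ≠ 2) (i₀ : ι) (hd₀ : d i₀ ≠ 0)
    (hd₀v : Even (d i₀).valuation) (hd : ∀ i ≠ i₀, Odd (d i).valuation)
    (hr : ∀ i ≠ i₀, Odd (r i₀ - r i).valuation) :
    HasCoverPoint d r ↔ ∀ i ≠ i₀, IsSquare (d i * (r i₀ - r i)) := by
  refine ⟨fun ⟨t, y, hty, h⟩ i hi => ?_, fun h => ⟨1, r i₀, by simp, fun i => ?_⟩⟩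
  · exact (isSquare_mul_or_of_isSquare_cover hq hd₀ hd₀v (hr i hi) hty (h i₀)
      (h i)).resolve_left
      (not_isSquare_of_padic_valuation_odd (padic_valuation_mul_odd hd₀ hd₀v (hd i hi)))
  · rcases eq_or_ne i i₀ with rfl | hi
    · simp
    · simpa using h i hi

end CoverPoints

section QuadraticCharSums

variable {F : Type*} [Field F] [Fintype F] [DecidableEq F]

theorem sum_quadraticChar_mul_sub (hF : ringChar F ≠ 2) {a : F} (ha : a ≠ 0) (r : F) :
    ∑ x, quadraticChar F (a * (x - r)) = 0 := by
  rw [← quadraticChar_sum_zero hF]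
  exact Fintype.sum_bijective (fun x => a * (x - r))
    ((mulLeft_bijective₀ a ha).comp (Equiv.subRight r).bijective) _ _ fun _ => rfl

theorem sum_quadraticChar_sub_mul_sub (hF : ringChar F ≠ 2) {r s : F} (hrs : r ≠ s) :
    ∑ x, quadraticChar F ((x - r) * (x - s)) = -1 := by
  have hsr : s - r ≠ 0 := sub_ne_zero.2 hrs.symm
  calc ∑ x, quadraticChar F ((x - r) * (x - s))
      = ∑ w, quadraticChar F (((s - r) * w + r - r) * ((s - r) * w + r - s)) :=
        (((Equiv.mulLeft₀ _ hsr).trans (Equiv.addRight r)).sum_comp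
          fun x => quadraticChar F ((x - r) * (x - s))).symm
    _ = ∑ w, quadraticChar F (-1) * (quadraticChar F w * quadraticChar F (1 - w)) := by
        refine Fintype.sum_congr _ _ fun w => ?_
        rw [← map_mul, ← map_mul, ← one_mul (quadraticChar F (-1 * _)),
          ← quadraticChar_sq_one' hsr, ← map_mul]
        congr 1
        ring
    _ = quadraticChar F (-1) * jacobiSum (quadraticChar F) (quadraticChar F)⁻¹ := by
        rw [← Finset.mul_sum, (quadraticChar_isQuadratic F).inv, jacobiSum]
    _ = -1 := by
        rw [jacobiSum_nontrivial_inv (quadraticChar_ne_one hF), mul_neg, ← sq,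
          quadraticChar_sq_one (neg_ne_zero.2 one_ne_zero)]

theorem neg_one_le_quadraticChar (x : F) : -1 ≤ quadraticChar F x := by
  rcases quadraticChar_isQuadratic F x with h | h | h <;> rw [h] <;> decide

theorem sum_prod_one_add_quadraticChar (hF : ringChar F ≠ 2) {a r : Fin 3 → F} (ha : ∀ i, a i ≠ 0)
    (hr : Function.Injective r) :
    ∑ x, ∏ i, (1 + quadraticChar F (a i * (x - r i))) =
      ∑ x, (1 + quadraticChar F (∏ i, a i * (x - r i))) -
        (quadraticChar F (a 0 * a 1) + quadraticChar F (a 0 * a 2) +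
          quadraticChar F (a 1 * a 2)) := by
  have hpair {i j : Fin 3} (hij : i ≠ j) :
      ∑ x, quadraticChar F (a i * (x - r i)) * quadraticChar F (a j * (x - r j)) =
        -quadraticChar F (a i * a j) := by
    simp_rw [← map_mul, mul_mul_mul_comm, map_mul _ (a i * a j), ← Finset.mul_sum,
      sum_quadraticChar_sub_mul_sub hF (hr.ne hij), mul_neg_one]
  have h01 := hpair (i := 0) (j := 1) (by decide)
  have h02 := hpair (i := 0) (j := 2) (by decide)
  have h12 := hpair (i := 1) (j := 2) (by decide)
  have hexpand (u v w : ℤ) : (1 + u) * (1 + v) * (1 + w) =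
      (1 + u * v * w) + (u + v + w) + (u * v + u * w + v * w) := by ring
  simp only [Fin.prod_univ_three, hexpand, Finset.sum_add_distrib, h01, h02, h12,
    sum_quadraticChar_mul_sub hF (ha _), map_mul _ (_ * (_ - r 0) * _), map_mul _ (_ * (_ - r 0))]
  ring

end QuadraticCharSums

section GoodReduction

/- If no such `x` exists then the left side of `sum_prod_one_add_quadraticChar` vanishes, so the
three characters there, which multiply to `1`, have a nonnegative sum. -/
theorem exists_isSquare_mul_sub_or_isSquare_mul {F : Type*} [Field F] [Finite F]
    (hF : ringChar F ≠ 2) {a r : Fin 3 → F} (ha : ∀ i, a i ≠ 0) (hr : Function.Injective r) :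
    (∃ x, ∀ i, IsSquare (a i * (x - r i))) ∨ ∀ i, IsSquare (a 0 * a i) := by
  classical
  have := Fintype.ofFinite F
  refine or_iff_not_imp_left.2 fun hno => ?_
  push Not at hno
  have hzero : ∑ x, ∏ i, (1 + quadraticChar F (a i * (x - r i))) = 0 := by
    refine Finset.sum_eq_zero fun x _ => ?_
    obtain ⟨i, hi⟩ := hno x
    refine Finset.prod_eq_zero (Finset.mem_univ i) ?_
    rw [quadraticChar_neg_one_iff_not_isSquare.2 hi, add_neg_cancel]
  have hnonneg : 0 ≤ ∑ x, (1 + quadraticChar F (∏ i, a i * (x - r i))) :=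
    Finset.sum_nonneg fun x _ => neg_le_iff_add_nonneg'.1 (neg_one_le_quadraticChar _)
  have h12 : quadraticChar F (a 1 * a 2) =
      quadraticChar F (a 0 * a 1) * quadraticChar F (a 0 * a 2) := by
    rw [← map_mul, mul_mul_mul_comm, ← sq, map_mul _ (a 0 ^ 2), quadraticChar_sq_one' (ha 0),
      one_mul]
  rw [sum_prod_one_add_quadraticChar hF ha hr, h12] at hzero
  have h0 {i : Fin 3} := mul_ne_zero (ha 0) (ha i)
  have hsq : quadraticChar F (a 0 * a 1) = 1 ∧ quadraticChar F (a 0 * a 2) = 1 := by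
    rcases quadraticChar_dichotomy (@h0 1) with h | h <;>
      rcases quadraticChar_dichotomy (@h0 2) with h' | h' <;> rw [h, h'] at hzero ⊢ <;> omega
  intro i
  fin_cases i
  exacts [.mul_self _, (quadraticChar_one_iff_isSquare h0).1 hsq.1,
    (quadraticChar_one_iff_isSquare h0).1 hsq.2]

theorem exists_intCast_zmod_eq_and_forall {q : ℕ} {ι : Type*} {r : ι → ℤ}
    (hr : Function.Injective fun i => (r i : ZMod q)) (x : ZMod q) :
    ∃ m : ℤ, (m : ZMod q) = x ∧ ∀ i, m = r i ∨ (m : ZMod q) ≠ r i := by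
  by_cases hx : ∃ i, (r i : ZMod q) = x
  · obtain ⟨i, rfl⟩ := hx
    exact ⟨r i, rfl, fun j => or_iff_not_imp_right.2 fun h => congrArg r (hr (not_not.1 h))⟩
  · obtain ⟨m, rfl⟩ := ZMod.intCast_surjective x
    exact ⟨m, rfl, fun i => .inr fun h => hx ⟨i, h.symm⟩⟩

theorem hasCoverPoint_of_good_reduction {q : ℕ} [Fact q.Prime] (hq : q ≠ 2) {d r : Fin 3 → ℤ}
    (hd : ∀ i, (d i : ZMod q) ≠ 0) (hr : Function.Injective fun i => (r i : ZMod q)) :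
    HasCoverPoint (fun i => (d i : ℚ_[q])) fun i => (r i : ℚ_[q]) := by
  rcases exists_isSquare_mul_sub_or_isSquare_mul (by rwa [ZMod.ringChar_zmod_n]) hd hr with
    ⟨x, hx⟩ | h
  · obtain ⟨m, rfl, hm⟩ := exists_intCast_zmod_eq_and_forall hr x
    refine ⟨1, m, by simp, fun i => ?_⟩
    rcases hm i with h | h
    · simp [h]
    · have hne : ((d i * (m - r i) : ℤ) : ZMod q) ≠ 0 := by
        push_cast
        exact mul_ne_zero (hd i) (sub_ne_zero.2 h)
      simpa using (isSquare_padic_intCast_iff hq hne).2 (by simpa using hx i)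
  · have hd₀ : (d 0 : ℚ_[q]) ≠ 0 := by
      rw [Int.cast_ne_zero]
      exact fun h0 => hd 0 (by rw [h0, Int.cast_zero])
    refine hasCoverPoint_of_isSquare_mul (i₀ := 0) hd₀ fun i => ?_
    have hne : ((d 0 * d i : ℤ) : ZMod q) ≠ 0 := by
      push_cast
      exact mul_ne_zero (hd 0) (hd i)
    simpa using (isSquare_padic_intCast_iff hq hne).2 (by simpa using h i)

end GoodReduction

section CongruentSystem

/-- Solvability over `K` of the system `H₁, H₂, H₃` attached to `n` and `d₁, d₂, d₃`. -/
def CongruentSystemSolvable (K : Type*) [Field K] (n d₁ d₂ d₃ : ℕ) : Prop :=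
  ∃ t u₁ u₂ u₃ : K, ¬(t = 0 ∧ u₁ = 0 ∧ u₂ = 0 ∧ u₃ = 0) ∧
    -(n : K) * t ^ 2 + (d₂ : K) * u₂ ^ 2 - (d₃ : K) * u₃ ^ 2 = 0 ∧
    -(n : K) * t ^ 2 + (d₃ : K) * u₃ ^ 2 - (d₁ : K) * u₁ ^ 2 = 0 ∧
    2 * (n : K) * t ^ 2 + (d₁ : K) * u₁ ^ 2 - (d₂ : K) * u₂ ^ 2 = 0

/-- The roots of the cubic defining the congruent number curve `Y ^ 2 = X ^ 3 - n ^ 2 * X`. -/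
def congruentRoots (K : Type*) [Field K] (n : ℕ) : Fin 3 → K := ![n, -n, 0]

/-- Solvability over `K` of the covering of the congruent number curve with coefficients `d₁`, `d₂`
and `d₁ * d₂`, in the order of `congruentRoots`. -/
def HasCongruentCoverPoint (K : Type*) [Field K] (n d₁ d₂ : ℕ) : Prop :=
  HasCoverPoint ![(d₁ : K), d₂, d₁ * d₂] (congruentRoots K n)

theorem hasCongruentCoverPoint_iff {K : Type*} [Field K] {n d₁ d₂ : ℕ} :
    HasCongruentCoverPoint K n d₁ d₂ ↔ ∃ t y : K, ¬(t = 0 ∧ y = 0) ∧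
      IsSquare (d₁ * (y - n * t ^ 2)) ∧ IsSquare (d₂ * (y + n * t ^ 2)) ∧
        IsSquare (d₁ * d₂ * y) := by
  simp [HasCongruentCoverPoint, HasCoverPoint, congruentRoots, Fin.forall_fin_succ]

theorem exists_mul_sq_eq_iff {K : Type*} [Field K] {a b : K} (ha : a ≠ 0) :
    (∃ u, a * u ^ 2 = b) ↔ IsSquare (a * b) := by
  constructor
  · rintro ⟨u, rfl⟩
    exact ⟨a * u, by ring⟩
  · rintro ⟨s, hs⟩
    exact ⟨s / a, by field_simp; rw [sq, ← hs]⟩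

theorem congruentSystemSolvable_iff {K : Type*} [Field K] {n d₁ d₂ d₃ : ℕ} (h₁ : (d₁ : K) ≠ 0)
    (h₂ : (d₂ : K) ≠ 0) (h₃ : (d₃ : K) ≠ 0) (h : IsSquare (d₁ * d₂ * d₃ : K)) :
    CongruentSystemSolvable K n d₁ d₂ d₃ ↔ HasCongruentCoverPoint K n d₁ d₂ := by
  have hswap (y : K) : IsSquare (d₁ * d₂ * y) ↔ IsSquare (d₃ * y) :=
    ⟨isSquare_mul_of_isSquare_mul_left (mul_ne_zero h₁ h₂) h,
      isSquare_mul_of_isSquare_mul_left h₃ (by rwa [mul_comm])⟩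
  simp only [hasCongruentCoverPoint_iff, hswap, ← exists_mul_sq_eq_iff h₁,
    ← exists_mul_sq_eq_iff h₂, ← exists_mul_sq_eq_iff h₃]
  constructor
  · rintro ⟨t, u₁, u₂, u₃, hne, hH₁, hH₂, -⟩
    refine ⟨t, d₃ * u₃ ^ 2, fun ⟨ht, hy⟩ => hne ?_, ⟨u₁, ?_⟩, ⟨u₂, ?_⟩, u₃, rfl⟩
    · obtain rfl : u₃ = 0 := by simpa [h₃] using hy
      subst ht
      exact ⟨rfl, by simpa [h₁] using hH₂, by simpa [h₂] using hH₁, rfl⟩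
    · linear_combination -hH₂
    · linear_combination hH₁
  · rintro ⟨t, y, hty, ⟨u₁, hu₁⟩, ⟨u₂, hu₂⟩, u₃, hu₃⟩
    refine ⟨t, u₁, u₂, u₃, ?_, ?_, ?_, ?_⟩
    · rintro ⟨rfl, -, -, rfl⟩
      exact hty ⟨rfl, by simpa using hu₃.symm⟩
    · linear_combination hu₂ - hu₃
    · linear_combination hu₃ - hu₁
    · linear_combination hu₁ - hu₂

end CongruentSystem

section BadOddPrimes

/-- The one of `d` and its complementary divisor `n / d` that is prime to `q`, for squarefree `n`
and a prime `q ∣ n`. -/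
def primeToPart (n q d : ℕ) : ℕ := if q ∣ d then n / d else d

/-- The unit modulo `q` whose additive Legendre symbol is the entry at the prime `q` of one half of
`M_n x`: the upper half for `u = -2` and `(d, d') = (d₁, d₂)`, the lower half for `u = 2` and
`(d, d') = (d₂, d₁)`. -/
def monskyUnit (n : ℕ) (u : ℤ) (q d d' : ℕ) : ℤ :=
  primeToPart n q d * (if q ∣ d then u else 1) * if q ∣ d' then 2 else 1

/-- The local condition at the prime `q` expressed by the two rows at `q` of `M_n x = 0`. -/
def MonskyCondition (n d₁ d₂ q : ℕ) : Prop :=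
  IsSquare (monskyUnit n (-2) q d₁ d₂ : ZMod q) ∧ IsSquare (monskyUnit n 2 q d₂ d₁ : ZMod q)

theorem prime_dvd_div_iff {n d r : ℕ} (hn : Squarefree n) (hr : r.Prime) (hrn : r ∣ n)
    (hd : d ∣ n) : r ∣ n / d ↔ ¬r ∣ d := by
  obtain ⟨m, rfl⟩ := hd
  have hd₀ : 0 < d := Nat.pos_of_ne_zero (left_ne_zero_of_mul hn.ne_zero)
  rw [Nat.mul_div_cancel_left m hd₀]
  refine ⟨fun hm hd => ?_, (hr.dvd_mul.1 hrn).resolve_left⟩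
  exact Nat.not_coprime_of_dvd_of_dvd hr.one_lt hd hm (Nat.coprime_of_squarefree_mul hn)

theorem prime_dvd_primeToPart_iff {n q d r : ℕ} (hn : Squarefree n) (hr : r.Prime) (hrn : r ∣ n)
    (hd : d ∣ n) : r ∣ primeToPart n q d ↔ ¬(q ∣ d ↔ r ∣ d) := by
  unfold primeToPart
  split_ifs with h <;> simp [h, prime_dvd_div_iff hn hr hrn hd]

variable {q : ℕ} [Fact q.Prime]

theorem two_ne_zero_zmod (hq : q ≠ 2) : (2 : ZMod q) ≠ 0 :=
  Ring.two_ne_zero (by rwa [ZMod.ringChar_zmod_n])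

theorem monskyUnit_ne_zero {n d d' : ℕ} {u : ℤ} (hn : Squarefree n) (hq : q ≠ 2)
    (hqn : q ∣ n) (hd : d ∣ n) (hu : (u : ZMod q) ≠ 0) :
    (monskyUnit n u q d d' : ZMod q) ≠ 0 := by
  have h2 := two_ne_zero_zmod hq
  have hpart : (primeToPart n q d : ZMod q) ≠ 0 := by
    simp [ZMod.natCast_eq_zero_iff, prime_dvd_primeToPart_iff hn Fact.out hqn hd]
  unfold monskyUnit
  split_ifs <;> simp [*]

theorem padic_valuation_natCast_odd_iff {d : ℕ} (hd : Squarefree d) :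
    Odd (d : ℚ_[q]).valuation ↔ q ∣ d := by
  have hq : q.Prime := Fact.out
  rw [Padic.valuation_natCast, ← Nat.factorization_def d hq, Int.odd_coe_nat,
    hq.dvd_iff_one_le_factorization hd.ne_zero]
  have hle := hd.natFactorization_le_one q
  interval_cases d.factorization q <;> decide

theorem padic_valuation_natCast_even_iff {d : ℕ} (hd : Squarefree d) :
    Even (d : ℚ_[q]).valuation ↔ ¬q ∣ d := by
  rw [← padic_valuation_natCast_odd_iff hd, Int.not_odd_iff_even]

theorem padic_valuation_intCast_mul_odd {c : ℤ} (hc : (c : ZMod q) ≠ 0) {x : ℚ_[q]}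
    (hx : Odd x.valuation) : Odd (c * x).valuation := by
  have hcq : ¬(q : ℤ) ∣ c := by rwa [← ZMod.intCast_zmod_eq_zero_iff_dvd]
  have hc₀ : (c : ℚ_[q]) ≠ 0 := Int.cast_ne_zero.2 fun h => hcq (h ▸ dvd_zero _)
  refine padic_valuation_mul_odd hc₀ ?_ hx
  rw [Padic.valuation_intCast, padicValInt.eq_zero_of_not_dvd hcq]
  exact .zero

theorem padic_valuation_sub_congruentRoots_odd (hq : q ≠ 2) {n : ℕ} (hn : Squarefree n)
    (hqn : q ∣ n) {i j : Fin 3} (hij : j ≠ i) :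
    Odd (congruentRoots ℚ_[q] n i - congruentRoots ℚ_[q] n j).valuation := by
  have h2 := two_ne_zero_zmod hq
  obtain ⟨c, hc, h⟩ : ∃ c : ℤ, (c : ZMod q) ≠ 0 ∧
      congruentRoots ℚ_[q] n i - congruentRoots ℚ_[q] n j = c * n := by
    unfold congruentRoots
    fin_cases i <;> fin_cases j <;> first | exact absurd rfl hij | skip
    exacts [⟨2, by simpa, by simp; ring⟩, ⟨1, by simp, by simp⟩, ⟨-2, by simpa, by simp; ring⟩,
      ⟨-1, by simp, by simp⟩, ⟨-1, by simp, by simp⟩, ⟨1, by simp, by simp⟩]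
  rw [h]
  exact padic_valuation_intCast_mul_odd hc ((padic_valuation_natCast_odd_iff hn).2 hqn)

section LocalCases

variable {n d₁ d₂ : ℕ}

theorem hasCongruentCoverPoint_iff_of_not_dvd_of_not_dvd (hq : q ≠ 2) (hn : Squarefree n)
    (hqn : q ∣ n) (hd₁ : Squarefree d₁) (hd₂ : Squarefree d₂) (h₁ : ¬q ∣ d₁) (h₂ : ¬q ∣ d₂) :
    HasCongruentCoverPoint ℚ_[q] n d₁ d₂ ↔ IsSquare (d₁ : ℚ_[q]) ∧ IsSquare (d₂ : ℚ_[q]) := by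
  have hd₁₀ : (d₁ : ℚ_[q]) ≠ 0 := Nat.cast_ne_zero.2 hd₁.ne_zero
  have hd₂₀ : (d₂ : ℚ_[q]) ≠ 0 := Nat.cast_ne_zero.2 hd₂.ne_zero
  have hv₁ := (padic_valuation_natCast_even_iff hd₁).2 h₁
  have hv₂ := (padic_valuation_natCast_even_iff hd₂).2 h₂
  have hv₁₂ : Even (d₁ * d₂ : ℚ_[q]).valuation := by
    rw [Padic.valuation_mul hd₁₀ hd₂₀]
    exact hv₁.add hv₂
  rw [HasCongruentCoverPoint, hasCoverPoint_iff_of_even hq 2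
    (by simp [Fin.forall_fin_succ, hd₁₀, hd₂₀])
    (by intro i; fin_cases i; exacts [hv₁, hv₂, hv₁₂])
    fun i hi => padic_valuation_sub_congruentRoots_odd hq hn hqn hi]
  have h0 : IsSquare (d₁ * d₂ * d₁ : ℚ_[q]) ↔ IsSquare (d₂ : ℚ_[q]) :=
    isSquare_iff_of_mul_mul_eq_sq .one (mul_ne_zero hd₁₀ hd₂₀) (by ring)
  have h1 : IsSquare (d₁ * d₂ * d₂ : ℚ_[q]) ↔ IsSquare (d₁ : ℚ_[q]) :=
    isSquare_iff_of_mul_mul_eq_sq .one (mul_ne_zero hd₁₀ hd₂₀) (by ring)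
  simp [Fin.forall_fin_succ, h0, h1, and_comm]

theorem hasCongruentCoverPoint_iff_of_dvd_of_not_dvd (hq : q ≠ 2) (hn : Squarefree n)
    (hqn : q ∣ n) (hd₁ : d₁ ∣ n) (hd₂ : Squarefree d₂) (h₁ : q ∣ d₁) (h₂ : ¬q ∣ d₂) :
    HasCongruentCoverPoint ℚ_[q] n d₁ d₂ ↔
      IsSquare (-2 * (n / d₁ : ℕ) : ℚ_[q]) ∧ IsSquare (2 * d₂ : ℚ_[q]) := by
  have hn₀ : (n : ℚ_[q]) ≠ 0 := Nat.cast_ne_zero.2 hn.ne_zero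
  have hd₂₀ : (d₂ : ℚ_[q]) ≠ 0 := Nat.cast_ne_zero.2 hd₂.ne_zero
  have hm : (d₁ * (n / d₁ : ℕ) : ℚ_[q]) = n := by exact_mod_cast Nat.mul_div_cancel' hd₁
  have hv₁ := (padic_valuation_natCast_odd_iff (hn.squarefree_of_dvd hd₁)).2 h₁
  have hv₂ := (padic_valuation_natCast_even_iff hd₂).2 h₂
  have hv₁₂ : Odd (d₁ * d₂ : ℚ_[q]).valuation := by
    rw [mul_comm]
    exact padic_valuation_mul_odd hd₂₀ hv₂ hv₁
  have hall {P : Fin 3 → Prop} : (∀ i ≠ 1, P i) ↔ P 0 ∧ P 2 := by simp [Fin.forall_fin_succ]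
  rw [HasCongruentCoverPoint, hasCoverPoint_iff_of_odd hq 1 hd₂₀ hv₂ (hall.2 ⟨hv₁, hv₁₂⟩)
    fun i hi => padic_valuation_sub_congruentRoots_odd hq hn hqn hi, hall]
  have h0 : IsSquare (d₁ * (-n - n) : ℚ_[q]) ↔ IsSquare (-2 * (n / d₁ : ℕ) : ℚ_[q]) :=
    isSquare_iff_of_mul_mul_eq_sq .one (mul_ne_zero two_ne_zero hn₀)
      (by linear_combination (4 * n : ℚ_[q]) * hm)
  have h2 (h : IsSquare (-2 * (n / d₁ : ℕ) : ℚ_[q])) :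
      IsSquare (d₁ * d₂ * (-n - 0) : ℚ_[q]) ↔ IsSquare (2 * d₂ : ℚ_[q]) :=
    isSquare_iff_of_mul_mul_eq_sq h (mul_ne_zero (mul_ne_zero two_ne_zero hn₀) hd₂₀)
      (by linear_combination (4 * n * d₂ ^ 2 : ℚ_[q]) * hm)
  exact (and_congr_left' h0).trans (and_congr_right h2)

theorem hasCongruentCoverPoint_iff_of_not_dvd_of_dvd (hq : q ≠ 2) (hn : Squarefree n)
    (hqn : q ∣ n) (hd₁ : Squarefree d₁) (hd₂ : d₂ ∣ n) (h₁ : ¬q ∣ d₁) (h₂ : q ∣ d₂) :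
    HasCongruentCoverPoint ℚ_[q] n d₁ d₂ ↔
      IsSquare (2 * d₁ : ℚ_[q]) ∧ IsSquare (2 * (n / d₂ : ℕ) : ℚ_[q]) := by
  have hn₀ : (n : ℚ_[q]) ≠ 0 := Nat.cast_ne_zero.2 hn.ne_zero
  have hd₁₀ : (d₁ : ℚ_[q]) ≠ 0 := Nat.cast_ne_zero.2 hd₁.ne_zero
  have hm : (d₂ * (n / d₂ : ℕ) : ℚ_[q]) = n := by exact_mod_cast Nat.mul_div_cancel' hd₂
  have hv₁ := (padic_valuation_natCast_even_iff hd₁).2 h₁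
  have hv₂ := (padic_valuation_natCast_odd_iff (hn.squarefree_of_dvd hd₂)).2 h₂
  have hv₁₂ : Odd (d₁ * d₂ : ℚ_[q]).valuation := padic_valuation_mul_odd hd₁₀ hv₁ hv₂
  have hall {P : Fin 3 → Prop} : (∀ i ≠ 0, P i) ↔ P 2 ∧ P 1 := by
    simp [Fin.forall_fin_succ, and_comm]
  rw [HasCongruentCoverPoint, hasCoverPoint_iff_of_odd hq 0 hd₁₀ hv₁ (hall.2 ⟨hv₁₂, hv₂⟩)
    fun i hi => padic_valuation_sub_congruentRoots_odd hq hn hqn hi, hall]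
  have h1 : IsSquare (d₂ * (n - -n) : ℚ_[q]) ↔ IsSquare (2 * (n / d₂ : ℕ) : ℚ_[q]) :=
    isSquare_iff_of_mul_mul_eq_sq .one (mul_ne_zero two_ne_zero hn₀)
      (by linear_combination (4 * n : ℚ_[q]) * hm)
  have h2 (h : IsSquare (2 * (n / d₂ : ℕ) : ℚ_[q])) :
      IsSquare (d₁ * d₂ * (n - 0) : ℚ_[q]) ↔ IsSquare (2 * d₁ : ℚ_[q]) :=
    isSquare_iff_of_mul_mul_eq_sq h (mul_ne_zero (mul_ne_zero two_ne_zero hn₀) hd₁₀)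
      (by linear_combination (4 * n * d₁ ^ 2 : ℚ_[q]) * hm)
  exact (and_congr_right' h1).trans (and_congr_left h2)

theorem hasCongruentCoverPoint_iff_of_dvd_of_dvd (hq : q ≠ 2) (hn : Squarefree n)
    (hqn : q ∣ n) (hd₁ : d₁ ∣ n) (hd₂ : d₂ ∣ n) (h₁ : q ∣ d₁) (h₂ : q ∣ d₂) :
    HasCongruentCoverPoint ℚ_[q] n d₁ d₂ ↔
      IsSquare (-(n / d₁ : ℕ) : ℚ_[q]) ∧ IsSquare ((n / d₂ : ℕ) : ℚ_[q]) := by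
  have hn₀ : (n : ℚ_[q]) ≠ 0 := Nat.cast_ne_zero.2 hn.ne_zero
  have hm₁ : (d₁ * (n / d₁ : ℕ) : ℚ_[q]) = n := by exact_mod_cast Nat.mul_div_cancel' hd₁
  have hm₂ : (d₂ * (n / d₂ : ℕ) : ℚ_[q]) = n := by exact_mod_cast Nat.mul_div_cancel' hd₂
  have hv₁ := (padic_valuation_natCast_odd_iff (hn.squarefree_of_dvd hd₁)).2 h₁
  have hv₂ := (padic_valuation_natCast_odd_iff (hn.squarefree_of_dvd hd₂)).2 h₂
  have hd₁₀ := ne_zero_of_padic_valuation_odd hv₁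
  have hd₂₀ := ne_zero_of_padic_valuation_odd hv₂
  have hv₁₂ : Even (d₁ * d₂ : ℚ_[q]).valuation := by
    rw [Padic.valuation_mul hd₁₀ hd₂₀]
    exact hv₁.add_odd hv₂
  have hd₁₂₀ := mul_ne_zero hd₁₀ hd₂₀
  have hall {P : Fin 3 → Prop} : (∀ i ≠ 2, P i) ↔ P 0 ∧ P 1 := by simp [Fin.forall_fin_succ]
  rw [HasCongruentCoverPoint, hasCoverPoint_iff_of_odd hq 2 hd₁₂₀ hv₁₂
    (hall.2 ⟨hv₁, hv₂⟩) fun i hi => padic_valuation_sub_congruentRoots_odd hq hn hqn hi, hall]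
  have h0 : IsSquare (d₁ * (0 - n) : ℚ_[q]) ↔ IsSquare (-(n / d₁ : ℕ) : ℚ_[q]) :=
    isSquare_iff_of_mul_mul_eq_sq .one hn₀ (by linear_combination (n : ℚ_[q]) * hm₁)
  have h1 : IsSquare (d₂ * (0 - -n) : ℚ_[q]) ↔ IsSquare ((n / d₂ : ℕ) : ℚ_[q]) :=
    isSquare_iff_of_mul_mul_eq_sq .one hn₀ (by linear_combination (n : ℚ_[q]) * hm₂)
  exact and_congr h0 h1

end LocalCases

theorem hasCongruentCoverPoint_iff_monskyCondition {n d₁ d₂ : ℕ} (hq : q ≠ 2) (hn : Squarefree n)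
    (hqn : q ∣ n) (hd₁ : d₁ ∣ n) (hd₂ : d₂ ∣ n) :
    HasCongruentCoverPoint ℚ_[q] n d₁ d₂ ↔ MonskyCondition n d₁ d₂ q := by
  have h2 := two_ne_zero_zmod hq
  have hsf₁ := hn.squarefree_of_dvd hd₁
  have hsf₂ := hn.squarefree_of_dvd hd₂
  rw [MonskyCondition,
    ← isSquare_padic_intCast_iff hq (monskyUnit_ne_zero hn hq hqn hd₁ (by simpa using h2)),
    ← isSquare_padic_intCast_iff hq (monskyUnit_ne_zero hn hq hqn hd₂ (by simpa using h2))]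
  have h4 (x : ℚ_[q]) : IsSquare (4 * x) ↔ IsSquare x :=
    isSquare_mul_iff_of_isSquare ⟨2, by norm_num⟩ (by norm_num)
  by_cases h₁ : q ∣ d₁ <;> by_cases h₂ : q ∣ d₂ <;>
    simp only [monskyUnit, primeToPart, h₁, h₂, if_true, if_false, Int.cast_mul, Int.cast_natCast,
      Int.cast_neg, Int.cast_ofNat, mul_one]
  · rw [hasCongruentCoverPoint_iff_of_dvd_of_dvd hq hn hqn hd₁ hd₂ h₁ h₂, ← h4, ← h4 (n / d₂ : ℕ)]
    congr! 2 <;> ring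
  · rw [hasCongruentCoverPoint_iff_of_dvd_of_not_dvd hq hn hqn hd₁ hsf₂ h₁ h₂]
    congr! 2 <;> ring
  · rw [hasCongruentCoverPoint_iff_of_not_dvd_of_dvd hq hn hqn hsf₁ hd₂ h₁ h₂]
    congr! 2 <;> ring
  · rw [hasCongruentCoverPoint_iff_of_not_dvd_of_not_dvd hq hn hqn hsf₁ hsf₂ h₁ h₂]

end BadOddPrimes

section MonskyMatrix

theorem aLeg_eq_zero_iff {a : ℤ} {q : ℕ} : aLeg a q = 0 ↔ IsSquare (a : ZMod q) := by
  simp [aLeg]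

theorem aLeg_one (q : ℕ) : aLeg 1 q = 0 :=
  aLeg_eq_zero_iff.2 (by simp)

theorem aLeg_mul {q : ℕ} [Fact q.Prime] {a b : ℤ} (ha : (a : ZMod q) ≠ 0)
    (hb : (b : ZMod q) ≠ 0) : aLeg (a * b) q = aLeg a q + aLeg b q := by
  have hab : (a * b : ZMod q) ≠ 0 := mul_ne_zero ha hb
  simp only [aLeg, Int.cast_mul, ← quadraticChar_one_iff_isSquare ha,
    ← quadraticChar_one_iff_isSquare hb, ← quadraticChar_one_iff_isSquare hab, map_mul]
  rcases quadraticChar_dichotomy ha with ha' | ha' <;>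
    rcases quadraticChar_dichotomy hb with hb' | hb' <;> rw [ha', hb'] <;> decide

theorem aLeg_natCast_prod {ι : Type*} {q : ℕ} [Fact q.Prime] {f : ι → ℕ} {s : Finset ι}
    (hf : ∀ j ∈ s, (f j : ZMod q) ≠ 0) :
    aLeg ((∏ j ∈ s, f j : ℕ) : ℤ) q = ∑ j ∈ s, aLeg (f j) q := by
  induction s using Finset.cons_induction with
  | empty => simpa using aLeg_one q
  | cons j s hj ih =>
    rw [Finset.forall_mem_cons] at hf
    rw [Finset.prod_cons, Finset.sum_cons, Nat.cast_mul, aLeg_mul, ih hf.2]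
    · exact_mod_cast hf.1
    · exact_mod_cast Finset.prod_ne_zero_iff.2 hf.2

theorem aLeg_monskyUnit {n q d d' : ℕ} [Fact q.Prime] {u : ℤ} (hn : Squarefree n) (hq : q ≠ 2)
    (hqn : q ∣ n) (hd : d ∣ n) (hu : (u : ZMod q) ≠ 0) :
    aLeg (monskyUnit n u q d d') q = aLeg (primeToPart n q d) q +
      aLeg u q * (if q ∣ d then 1 else 0) + aLeg 2 q * if q ∣ d' then 1 else 0 := by
  have hunit := monskyUnit_ne_zero (d' := d') hn hq hqn hd hu
  unfold monskyUnit at hunit ⊢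
  rw [Int.cast_mul, Int.cast_mul] at hunit
  have hleft := left_ne_zero_of_mul hunit
  rw [aLeg_mul (by simpa using hleft) (right_ne_zero_of_mul hunit),
    aLeg_mul (left_ne_zero_of_mul hleft) (right_ne_zero_of_mul hleft)]
  split_ifs <;> simp [aLeg_one]

theorem natCast_padicValNat_zmod_two {d q : ℕ} [Fact q.Prime] (hd : Squarefree d) :
    (padicValNat q d : ZMod 2) = if q ∣ d then 1 else 0 := by
  split_ifs with h
  · rw [ZMod.natCast_eq_one_iff_odd, ← Int.odd_coe_nat, ← Padic.valuation_natCast]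
    exact (padic_valuation_natCast_odd_iff hd).2 h
  · simp [padicValNat.eq_zero_of_not_dvd h]

variable {k : ℕ} {p : Fin k → ℕ}

theorem squarefree_prod_of_injective_prime (hp : ∀ i, (p i).Prime) (hinj : Function.Injective p) :
    Squarefree (∏ i, p i) :=
  Finset.squarefree_prod_of_pairwise_isCoprime
    (fun i _ j _ hij => Nat.coprime_iff_isRelPrime.1 <|
      (Nat.coprime_primes (hp i) (hp j)).2 (hinj.ne hij)) fun i _ => (hp i).squarefree

theorem primeFactors_prod_of_injective_prime (hp : ∀ i, (p i).Prime)
    (hinj : Function.Injective p) : (∏ i, p i).primeFactors = Finset.univ.image p := by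
  have himage : ∏ q ∈ Finset.univ.image p, q = ∏ i, p i := Finset.prod_image hinj.injOn
  rw [← himage, Nat.primeFactors_prod (by simpa using hp)]

theorem prod_filter_dvd_of_dvd_prod_prime (hp : ∀ i, (p i).Prime) (hinj : Function.Injective p)
    {m : ℕ} (hm : m ∣ ∏ i, p i) : ∏ i with p i ∣ m, p i = m := by
  have hn := squarefree_prod_of_injective_prime hp hinj
  have himage : ({i | p i ∣ m} : Finset (Fin k)).image p = m.primeFactors := by
    rw [← Nat.primeFactors_filter_dvd_of_dvd hn.ne_zero hm,
      primeFactors_prod_of_injective_prime hp hinj, Finset.filter_image]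
  calc ∏ i with p i ∣ m, p i = ∏ q ∈ ({i | p i ∣ m} : Finset (Fin k)).image p, q :=
        (Finset.prod_image (f := id) hinj.injOn).symm
    _ = m := by rw [himage, Nat.prod_primeFactors_of_squarefree (hn.squarefree_of_dvd hm)]

theorem monskyA_mulVec (i : Fin k) (x : Fin k → ZMod 2) :
    (monskyA k p).mulVec x i = ∑ j with j ≠ i, aLeg (p j) (p i) * (x i + x j) := by
  have hoff (j : Fin k) (hj : j ∈ Finset.univ.filter (· ≠ i)) :
      monskyA k p i j * x j = aLeg (p j) (p i) * x j := by
    simp [monskyA, (Finset.mem_filter.1 hj).2.symm]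
  rw [Matrix.mulVec, dotProduct, ← Finset.add_sum_erase _ _ (Finset.mem_univ i),
    ← Finset.filter_ne', Finset.sum_congr rfl hoff]
  simp only [monskyA, Matrix.of_apply, if_true, Finset.sum_mul, mul_add, Finset.sum_add_distrib]

theorem monskyA_mulVec_padicValNat (hp : ∀ i, (p i).Prime) (hinj : Function.Injective p) {d : ℕ}
    (hd : d ∣ ∏ i, p i) (i : Fin k) :
    (monskyA k p).mulVec (fun j => (padicValNat (p j) d : ZMod 2)) i =
      aLeg (primeToPart (∏ i, p i) (p i) d) (p i) := by
  have hpf (j : Fin k) : Fact (p j).Prime := ⟨hp j⟩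
  have hn := squarefree_prod_of_injective_prime hp hinj
  have hdvd (j : Fin k) : p j ∣ primeToPart (∏ i, p i) (p i) d ↔ ¬(p i ∣ d ↔ p j ∣ d) :=
    prime_dvd_primeToPart_iff hn (hp j) (Finset.dvd_prod_of_mem p (Finset.mem_univ j)) hd
  have hpart : primeToPart (∏ i, p i) (p i) d ∣ ∏ i, p i := by
    unfold primeToPart
    split_ifs
    exacts [Nat.div_dvd_of_dvd hd, hd]
  have hsum : aLeg (primeToPart (∏ i, p i) (p i) d) (p i) =
      ∑ j with ¬(p i ∣ d ↔ p j ∣ d), aLeg (p j) (p i) := by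
    rw [← prod_filter_dvd_of_dvd_prod_prime hp hinj hpart]
    simp only [hdvd]
    refine aLeg_natCast_prod fun j hj => ?_
    rw [Ne, ZMod.natCast_eq_zero_iff, Nat.prime_dvd_prime_iff_eq (hp i) (hp j)]
    intro hij
    simp [← hij] at hj
  rw [monskyA_mulVec, hsum, Finset.sum_filter, Finset.sum_filter]
  refine Finset.sum_congr rfl fun j _ => ?_
  simp only [natCast_padicValNat_zmod_two (hn.squarefree_of_dvd hd)]
  by_cases hij : j = i
  · simp [hij]
  · by_cases hi : p i ∣ d <;> by_cases hj : p j ∣ d <;> simp [hi, hj, hij, CharTwo.add_self_eq_zero]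

theorem monskyM_mulVec_eq_zero_iff (hp : ∀ i, (p i).Prime) (hinj : Function.Injective p)
    (hodd : Odd (∏ i, p i)) {d₁ d₂ : ℕ} (hd₁ : d₁ ∣ ∏ i, p i) (hd₂ : d₂ ∣ ∏ i, p i) :
    (monskyM k p).mulVec (Sum.elim (fun i => (padicValNat (p i) d₁ : ZMod 2))
      fun i => (padicValNat (p i) d₂ : ZMod 2)) = 0 ↔
      ∀ i, MonskyCondition (∏ i, p i) d₁ d₂ (p i) := by
  have hn := squarefree_prod_of_injective_prime hp hinj
  rw [monskyM, Matrix.fromBlocks_mulVec, funext_iff, Sum.forall, ← forall_and]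
  refine forall_congr' fun i => ?_
  have : Fact (p i).Prime := ⟨hp i⟩
  have hpn : p i ∣ ∏ i, p i := Finset.dvd_prod_of_mem p (Finset.mem_univ i)
  have hp2 : p i ≠ 2 := fun h => hodd.not_two_dvd_nat (h ▸ hpn)
  have h2 := two_ne_zero_zmod hp2
  rw [MonskyCondition, ← aLeg_eq_zero_iff, ← aLeg_eq_zero_iff,
    aLeg_monskyUnit hn hp2 hpn hd₁ (by simpa using h2),
    aLeg_monskyUnit hn hp2 hpn hd₂ (by simpa using h2)]
  simp only [Sum.elim_inl, Sum.elim_inr, Sum.elim_comp_inl, Sum.elim_comp_inr, Pi.add_apply,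
    Pi.zero_apply, Matrix.add_mulVec, monskyD, Matrix.mulVec_diagonal,
    monskyA_mulVec_padicValNat hp hinj hd₁, monskyA_mulVec_padicValNat hp hinj hd₂,
    natCast_padicValNat_zmod_two (hn.squarefree_of_dvd hd₁),
    natCast_padicValNat_zmod_two (hn.squarefree_of_dvd hd₂)]
  rw [add_left_comm, add_comm (aLeg 2 (p i) * _), ← add_assoc]

end MonskyMatrix

section Reciprocity

open scoped NumberTheorySymbols
open ZMod (χ₄ χ₈ χ₈')

theorem jacobiSym_eq_prod_primeFactors {d : ℕ} (hd : Squarefree d) (u : ℤ) :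
    J(u | d) = ∏ q ∈ d.primeFactors, J(u | q) := by
  have hlist : ∀ q ∈ d.primeFactorsList, q ≠ 0 := fun q hq =>
    (Nat.prime_of_mem_primeFactorsList hq).ne_zero
  conv_lhs => rw [← Nat.prod_primeFactorsList hd.ne_zero, jacobiSym.list_prod_right hlist]
  exact (List.prod_toFinset _ ((Nat.squarefree_iff_nodup_primeFactorsList hd.ne_zero).1 hd)).symm

theorem prod_primeFactors_ite_dvd_jacobiSym {n d : ℕ} (hn : Squarefree n) (hd : d ∣ n) (u : ℤ) :
    ∏ q ∈ n.primeFactors, (if q ∣ d then J(u | q) else 1) = J(u | d) := by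
  rw [jacobiSym_eq_prod_primeFactors (hn.squarefree_of_dvd hd), ← Finset.prod_filter]
  refine Finset.prod_congr ?_ fun _ _ => rfl
  rw [← Nat.primeFactors_filter_dvd_of_dvd hn.ne_zero hd]

theorem prod_primeFactors_jacobiSym_monskyUnit {n d d' : ℕ} (hn : Squarefree n) (hd : d ∣ n)
    (hd' : d' ∣ n) (u : ℤ) :
    ∏ q ∈ n.primeFactors, J(monskyUnit n u q d d' | q) =
      J(d | n / d) * J((n / d : ℕ) | d) * J(u | d) * J(2 | d') := by
  rw [← prod_primeFactors_ite_dvd_jacobiSym hn hd,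
    ← prod_primeFactors_ite_dvd_jacobiSym hn (Nat.div_dvd_of_dvd hd),
    ← prod_primeFactors_ite_dvd_jacobiSym hn hd, ← prod_primeFactors_ite_dvd_jacobiSym hn hd',
    ← Finset.prod_mul_distrib, ← Finset.prod_mul_distrib, ← Finset.prod_mul_distrib]
  refine Finset.prod_congr rfl fun q hq => ?_
  have hdvd := prime_dvd_div_iff hn (Nat.prime_of_mem_primeFactors hq)
    (Nat.dvd_of_mem_primeFactors hq) hd
  simp only [monskyUnit, primeToPart, jacobiSym.mul_left, hdvd]
  split_ifs <;> simp [jacobiSym.one_left]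

theorem jacobiSym_mul_jacobiSym_swap {d m : ℕ} (hd : Odd d) (hm : Odd m) (hdm : d.Coprime m) :
    J(d | m) * J(m | d) = if χ₄ d = 1 then 1 else -χ₄ (d * m : ℕ) := by
  have hsq : J(m | d) * J(m | d) = 1 := by rw [← sq, jacobiSym.sq_one (by simpa using hdm.symm)]
  rcases Nat.odd_mod_four_iff.1 (Nat.odd_iff.1 hd) with hd₁ | hd₃
  · rw [jacobiSym.quadratic_reciprocity_one_mod_four hd₁ hm, hsq,
      if_pos (ZMod.χ₄_nat_one_mod_four hd₁)]
  · have hχd := ZMod.χ₄_nat_three_mod_four hd₃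
    rw [if_neg (by rw [hχd]; decide), Nat.cast_mul, map_mul, hχd]
    rcases Nat.odd_mod_four_iff.1 (Nat.odd_iff.1 hm) with hm₁ | hm₃
    · rw [jacobiSym.quadratic_reciprocity_one_mod_four' hd hm₁, hsq,
        ZMod.χ₄_nat_one_mod_four hm₁]
      norm_num
    · rw [jacobiSym.quadratic_reciprocity_three_mod_four hd₃ hm₃, neg_mul, hsq,
        ZMod.χ₄_nat_three_mod_four hm₃]
      norm_num

theorem jacobiSym_mul_jacobiSym_two_of_forall_monskyUnit {n d d' : ℕ} {u : ℤ} (hn : Squarefree n)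
    (hodd : Odd n) (hd : d ∣ n) (hd' : d' ∣ n)
    (h : ∀ q ∈ n.primeFactors, J(monskyUnit n u q d d' | q) = 1) :
    (if χ₄ d = 1 then 1 else -χ₄ n) * J(u | d) * J(2 | d') = 1 := by
  have hmul : d * (n / d) = n := Nat.mul_div_cancel' hd
  have hcop : d.Coprime (n / d) := Nat.coprime_of_squarefree_mul (by rwa [hmul])
  have hrec := jacobiSym_mul_jacobiSym_swap (hodd.of_dvd_nat hd)
    (hodd.of_dvd_nat (Nat.div_dvd_of_dvd hd)) hcop
  rw [hmul] at hrec
  rw [← hrec, ← prod_primeFactors_jacobiSym_monskyUnit hn hd hd', Finset.prod_eq_one h]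

theorem jacobiSym_eq_one_of_isSquare {q : ℕ} [Fact q.Prime] {a : ℤ} (ha₀ : (a : ZMod q) ≠ 0)
    (ha : IsSquare (a : ZMod q)) : J(a | q) = 1 := by
  rwa [← jacobiSym.legendreSym.to_jacobiSym, legendreSym.eq_one_iff q ha₀]

theorem zmod_eight_eq_of_chi (a b c : ZMod 8)
    (h₁ : (if χ₄ a.cast = 1 then 1 else -χ₄ c.cast) * χ₈' a * χ₈ b = 1)
    (h₂ : (if χ₄ b.cast = 1 then 1 else -χ₄ c.cast) * χ₈ b * χ₈ a = 1) :
    (a = 1 ∧ b = 1) ∨ (a = 5 ∧ b = 5) ∨ (a * b = 7 ∧ (c * b = 1 ∨ c * b = 5)) := by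
  decide +revert

theorem zmod_eight_eq_of_forall_monskyCondition {n d₁ d₂ : ℕ} (hn : Squarefree n) (hodd : Odd n)
    (hd₁ : d₁ ∣ n) (hd₂ : d₂ ∣ n) (h : ∀ q ∈ n.primeFactors, MonskyCondition n d₁ d₂ q) :
    ((d₁ : ZMod 8) = 1 ∧ (d₂ : ZMod 8) = 1) ∨ ((d₁ : ZMod 8) = 5 ∧ (d₂ : ZMod 8) = 5) ∨
      ((d₁ * d₂ : ZMod 8) = 7 ∧ ((n * d₂ : ZMod 8) = 1 ∨ (n * d₂ : ZMod 8) = 5)) := by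
  have hcast (x : ℕ) : ((x : ZMod 8).cast : ZMod 4) = x := ZMod.cast_natCast (by norm_num) x
  have hJ {u : ℤ} {d d' : ℕ} (hd : d ∣ n) (hu : u = 2 ∨ u = -2)
      (hsq : ∀ q ∈ n.primeFactors, IsSquare (monskyUnit n u q d d' : ZMod q)) :
      ∀ q ∈ n.primeFactors, J(monskyUnit n u q d d' | q) = 1 := by
    intro q hq
    have : Fact q.Prime := ⟨Nat.prime_of_mem_primeFactors hq⟩
    have hqn := Nat.dvd_of_mem_primeFactors hq
    have hq2 : q ≠ 2 := fun h => hodd.not_two_dvd_nat (h ▸ hqn)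
    have h2 := two_ne_zero_zmod hq2
    refine jacobiSym_eq_one_of_isSquare (monskyUnit_ne_zero hn hq2 hqn hd ?_) (hsq q hq)
    rcases hu with rfl | rfl <;> simpa using h2
  have h₁ := jacobiSym_mul_jacobiSym_two_of_forall_monskyUnit hn hodd hd₁ hd₂
    (hJ hd₁ (.inr rfl) fun q hq => (h q hq).1)
  have h₂ := jacobiSym_mul_jacobiSym_two_of_forall_monskyUnit hn hodd hd₂ hd₁
    (hJ hd₂ (.inl rfl) fun q hq => (h q hq).2)
  rw [jacobiSym.at_neg_two (hodd.of_dvd_nat hd₁), jacobiSym.at_two (hodd.of_dvd_nat hd₂)] at h₁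
  rw [jacobiSym.at_two (hodd.of_dvd_nat hd₁), jacobiSym.at_two (hodd.of_dvd_nat hd₂)] at h₂
  exact zmod_eight_eq_of_chi d₁ d₂ n (by simpa only [hcast] using h₁)
    (by simpa only [hcast] using h₂)

theorem hasCongruentCoverPoint_padic_two_of_intCast {n d₁ d₂ : ℕ} {t y : ℤ}
    (hty : ¬(t = 0 ∧ y = 0)) (h₁ : (d₁ * (y - n * t ^ 2) : ZMod 8) = 1)
    (h₂ : (d₂ * (y + n * t ^ 2) : ZMod 8) = 1) (h₃ : IsSquare (d₁ * d₂ * y : ℚ_[2])) :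
    HasCongruentCoverPoint ℚ_[2] n d₁ d₂ := by
  rw [hasCongruentCoverPoint_iff]
  refine ⟨t, y, by exact_mod_cast hty, ?_, ?_, h₃⟩
  · have h := isSquare_padic_two_intCast (m := d₁ * (y - n * t ^ 2 : ℤ)) (by push_cast; exact h₁)
    simpa using h
  · have h := isSquare_padic_two_intCast (m := d₂ * (y + n * t ^ 2 : ℤ)) (by push_cast; exact h₂)
    simpa using h

theorem hasCongruentCoverPoint_padic_two_of_zmod_eight_eq {n d₁ d₂ : ℕ} (hodd : Odd n)
    (h : ((d₁ : ZMod 8) = 1 ∧ (d₂ : ZMod 8) = 1) ∨ ((d₁ : ZMod 8) = 5 ∧ (d₂ : ZMod 8) = 5) ∨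
      ((d₁ * d₂ : ZMod 8) = 7 ∧ ((n * d₂ : ZMod 8) = 1 ∨ (n * d₂ : ZMod 8) = 5))) :
    HasCongruentCoverPoint ℚ_[2] n d₁ d₂ := by
  have hn : (4 * n : ZMod 8) = 4 := by
    obtain ⟨m, rfl⟩ := hodd
    push_cast
    linear_combination (m : ZMod 8) * (by decide : (8 : ZMod 8) = 0)
  have hd (h₁₂ : (d₁ * d₂ : ZMod 8) = 1) : IsSquare (d₁ * d₂ * (1 : ℤ) : ℚ_[2]) := by
    exact_mod_cast isSquare_padic_two_intCast (m := d₁ * d₂ * 1) (by simpa using h₁₂)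
  rcases h with ⟨h₁, h₂⟩ | ⟨h₁, h₂⟩ | ⟨h₁₂, hn₂ | hn₂⟩
  · refine hasCongruentCoverPoint_padic_two_of_intCast (t := 0) (y := 1) (by decide) ?_ ?_ (hd ?_)
    all_goals simp [h₁, h₂]
  · have key : ∀ c : ZMod 8, 4 * c = 4 → 5 * (1 - c * 2 ^ 2) = 1 ∧ 5 * (1 + c * 2 ^ 2) = 1 := by
      decide
    refine hasCongruentCoverPoint_padic_two_of_intCast (t := 2) (y := 1) (by decide) ?_ ?_ (hd ?_)
    · simpa [h₁] using (key _ hn).1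
    · simpa [h₂] using (key _ hn).2
    · rw [h₁, h₂]
      decide
  · have key : ∀ a b c : ZMod 8, a * b = 7 → c * b = 1 → -(a * c) = 1 := by decide
    refine hasCongruentCoverPoint_padic_two_of_intCast (t := 1) (y := 0) (by decide) ?_ ?_ ?_
    · simpa using key _ _ _ h₁₂ hn₂
    · simpa [mul_comm] using hn₂
    · simp
  · have key : ∀ a b c : ZMod 8, a * b = 7 → c * b = 5 →
        a * (4 * (a * b) - c) = 1 ∧ b * (4 * (a * b) + c) = 1 := by decide
    refine hasCongruentCoverPoint_padic_two_of_intCast (t := 1) (y := 4 * (d₁ * d₂))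
      (fun h => one_ne_zero h.1) ?_ ?_ ⟨2 * (d₁ * d₂), by push_cast; ring⟩
    · simpa using (key _ _ _ h₁₂ hn₂).1
    · simpa using (key _ _ _ h₁₂ hn₂).2

end Reciprocity

section LocalSolvability

theorem hasCongruentCoverPoint_real (n d₁ d₂ : ℕ) : HasCongruentCoverPoint ℝ n d₁ d₂ := by
  rw [hasCongruentCoverPoint_iff]
  refine ⟨0, 1, by simp, ?_⟩
  simp only [Real.isSquare_iff]
  exact ⟨by simp, by simp, by positivity⟩

theorem hasCongruentCoverPoint_of_not_dvd {n d₁ d₂ q : ℕ} [Fact q.Prime] (hq : q ≠ 2)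
    (hqn : ¬q ∣ n) (hd₁ : d₁ ∣ n) (hd₂ : d₂ ∣ n) : HasCongruentCoverPoint ℚ_[q] n d₁ d₂ := by
  have hne {d : ℕ} (hd : d ∣ n) : (d : ZMod q) ≠ 0 := by
    rw [Ne, ZMod.natCast_eq_zero_iff]
    exact fun h => hqn (h.trans hd)
  have hn := hne dvd_rfl
  have h := hasCoverPoint_of_good_reduction hq (d := ![(d₁ : ℤ), d₂, d₁ * d₂])
    (r := ![(n : ℤ), -n, 0]) (by simp [Fin.forall_fin_succ, hne hd₁, hne hd₂]) ?_
  · rw [HasCongruentCoverPoint]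
    convert h using 1
    · ext i
      fin_cases i <;> simp
    · ext i
      fin_cases i <;> simp [congruentRoots]
  · have hadd : (n : ZMod q) + n ≠ 0 := by
      rw [← two_mul]
      exact mul_ne_zero (two_ne_zero_zmod hq) hn
    intro i j hij
    fin_cases i <;> fin_cases j <;>
      simp_all [eq_neg_iff_add_eq_zero, neg_eq_iff_add_eq_zero]

theorem hasCongruentCoverPoint_local_iff_monskyCondition {n d₁ d₂ : ℕ} (hn : Squarefree n)
    (hodd : Odd n) (hd₁ : d₁ ∣ n) (hd₂ : d₂ ∣ n) :
    (HasCongruentCoverPoint ℝ n d₁ d₂ ∧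
        ∀ (q : ℕ) [Fact q.Prime], HasCongruentCoverPoint ℚ_[q] n d₁ d₂) ↔
      ∀ q ∈ n.primeFactors, MonskyCondition n d₁ d₂ q := by
  constructor
  · rintro ⟨-, h⟩ q hq
    have hqn := Nat.dvd_of_mem_primeFactors hq
    have : Fact q.Prime := ⟨Nat.prime_of_mem_primeFactors hq⟩
    have hq2 : q ≠ 2 := fun hq => hodd.not_two_dvd_nat (hq ▸ hqn)
    exact (hasCongruentCoverPoint_iff_monskyCondition hq2 hn hqn hd₁ hd₂).1 (h q)
  · refine fun h => ⟨hasCongruentCoverPoint_real n d₁ d₂, fun q hq => ?_⟩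
    rcases eq_or_ne q 2 with rfl | hq2
    · exact hasCongruentCoverPoint_padic_two_of_zmod_eight_eq hodd
        (zmod_eight_eq_of_forall_monskyCondition hn hodd hd₁ hd₂ h)
    by_cases hqn : q ∣ n
    · exact (hasCongruentCoverPoint_iff_monskyCondition hq2 hn hqn hd₁ hd₂).2
        (h q (Nat.mem_primeFactors.2 ⟨hq.out, hqn, hn.ne_zero⟩))
    · exact hasCongruentCoverPoint_of_not_dvd hq2 hqn hd₁ hd₂

theorem stmt_2_general {k : ℕ} {p : Fin k → ℕ} (hp : ∀ i, (p i).Prime)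
    (hinj : Function.Injective p) (hodd : Odd (∏ i, p i)) {d₁ d₂ d₃ : ℕ} (hd₁ : d₁ ∣ ∏ i, p i)
    (hd₂ : d₂ ∣ ∏ i, p i) (hd₃ : d₃ ≠ 0) (hd : IsSquare (d₁ * d₂ * d₃)) :
    (CongruentSystemSolvable ℝ (∏ i, p i) d₁ d₂ d₃ ∧
        ∀ (q : ℕ) [Fact q.Prime], CongruentSystemSolvable ℚ_[q] (∏ i, p i) d₁ d₂ d₃) ↔
      (monskyM k p).mulVec (Sum.elim (fun i => (padicValNat (p i) d₁ : ZMod 2))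
        fun i => (padicValNat (p i) d₂ : ZMod 2)) = 0 := by
  have hn := squarefree_prod_of_injective_prime hp hinj
  have hcover (K : Type) [Field K] [CharZero K] :
      CongruentSystemSolvable K (∏ i, p i) d₁ d₂ d₃ ↔
        HasCongruentCoverPoint K (∏ i, p i) d₁ d₂ :=
    congruentSystemSolvable_iff (Nat.cast_ne_zero.2 (ne_zero_of_dvd_ne_zero hn.ne_zero hd₁))
      (Nat.cast_ne_zero.2 (ne_zero_of_dvd_ne_zero hn.ne_zero hd₂)) (Nat.cast_ne_zero.2 hd₃)
      (by simpa using hd.map (Nat.castRingHom K))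
  simp only [hcover]
  rw [hasCongruentCoverPoint_local_iff_monskyCondition hn hodd hd₁ hd₂,
    monskyM_mulVec_eq_zero_iff hp hinj hodd hd₁ hd₂,
    primeFactors_prod_of_injective_prime hp hinj]
  simp

end LocalSolvability

/-- for positive divisors `d₁, d₂` of the odd squarefree `n = p₁⋯p_k` and `d₃` the
squarefree part of `d₁·d₂`, the system `H₁, H₂, H₃` is locally solvable everywhere iff
`M_n·x = 0`, where `x = (v_{p₁}(d₁), …, v_{p_k}(d₁), v_{p₁}(d₂), …, v_{p_k}(d₂))`. -/
theorem stmt_2 (k : ℕ) (p : Fin k → ℕ) (hp : ∀ i, (p i).Prime)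
    (hinj : Function.Injective p)
    (n : ℕ) (hn : n = ∏ i, p i) (hnodd : Odd n)
    (d₁ d₂ : ℕ) (hd₁ : d₁ ∣ n) (hd₂ : d₂ ∣ n) (hd₁pos : 0 < d₁) (hd₂pos : 0 < d₂)
    (d₃ : ℕ) (hd₃sf : Squarefree d₃) (hd₃ : ∃ s : ℕ, 0 < s ∧ d₁ * d₂ = d₃ * s ^ 2) :
    ((∃ t u₁ u₂ u₃ : ℝ, ¬(t = 0 ∧ u₁ = 0 ∧ u₂ = 0 ∧ u₃ = 0) ∧
        -(n : ℝ) * t ^ 2 + (d₂ : ℝ) * u₂ ^ 2 - (d₃ : ℝ) * u₃ ^ 2 = 0 ∧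
        -(n : ℝ) * t ^ 2 + (d₃ : ℝ) * u₃ ^ 2 - (d₁ : ℝ) * u₁ ^ 2 = 0 ∧
        2 * (n : ℝ) * t ^ 2 + (d₁ : ℝ) * u₁ ^ 2 - (d₂ : ℝ) * u₂ ^ 2 = 0) ∧
      (∀ (q : ℕ) [Fact q.Prime], ∃ t u₁ u₂ u₃ : ℚ_[q],
        ¬(t = 0 ∧ u₁ = 0 ∧ u₂ = 0 ∧ u₃ = 0) ∧
        -(n : ℚ_[q]) * t ^ 2 + (d₂ : ℚ_[q]) * u₂ ^ 2 - (d₃ : ℚ_[q]) * u₃ ^ 2 = 0 ∧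
        -(n : ℚ_[q]) * t ^ 2 + (d₃ : ℚ_[q]) * u₃ ^ 2 - (d₁ : ℚ_[q]) * u₁ ^ 2 = 0 ∧
        2 * (n : ℚ_[q]) * t ^ 2 + (d₁ : ℚ_[q]) * u₁ ^ 2 - (d₂ : ℚ_[q]) * u₂ ^ 2 = 0)) ↔
    (monskyM k p).mulVec
      (Sum.elim (fun i => (padicValNat (p i) d₁ : ZMod 2))
        (fun i => (padicValNat (p i) d₂ : ZMod 2))) = 0 := by
  subst hn
  obtain ⟨s, -, h⟩ := hd₃
  exact stmt_2_general hp hinj hnodd hd₁ hd₂ hd₃sf.ne_zero ⟨d₃ * s, by rw [h]; ring⟩
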